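/- For every n : ℕ and every x ∈ ℂ with x ≠ 0, det (x • (Sₙ : Matrix (Fin 14) (Fin 14) ℂ) − x⁻¹ • Sₙᵀ) = (1 − (n : ℂ)) * P₀(x) + (n : ℂ) * P₁(x). -/

import Mathlib

/-!
Multiplying the matrix by `x` and writing `z = x ^ 2` turns the claim into an identity for
`det (z • Sₙ - Sₙᵀ)` over `ℤ[z]`. Read `z • Sₙ - Sₙᵀ` as a linear system in the unknowns
`a₀, …, a₅, b₀, …, b₅, v₁₂, v₁₃`. Rows `i` and `6 + i` with `i ≤ 4` contain `a_{i+1}` and `b_{i+1}`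
respectively with coefficient `-1`, and otherwise only `v₁₃` and unknowns that come earlier in the
order `a₀, b₀, a₁, b₁, a₂, b₂, …`. Solving them in this order therefore expresses
everything by `a₀, b₀, v₁₂, v₁₃` with coefficients in `ℤ[z]`. In matrix terms: after the rows and columns are reordered, the upper left `10 × 10` block
`L` is lower triangular with diagonal `-1`, the solution of the first ten rows is an explicit matrix
`X` with `L * X + K = 0`, and the determinant is that of the `4 × 4` Schur complement `C * X + D`.
The column order is the row order followed by the square of a permutation, so the reordering
does not change the sign.
-/

open Matrix

/-- The Seifert matrix `Sₙ` of the knot `Kₙ`. -/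
def Smat (n : ℕ) : Matrix (Fin 14) (Fin 14) ℤ :=
  !![-1, 0, 0, 0, 0, 0, 1, 0, 0, 0, 0, 0, 0, -1;
      1,-1, 0, 0, 0, 0,-1, 1, 0, 0, 0, 0, 0, 0;
      0, 1,-1, 0, 0, 0, 0,-1, 1, 0, 0, 0, 0, 0;
      0, 0, 1,-1, 0, 0, 0, 0,-1, 1, 0, 0, 0, 0;
      0, 0, 0, 1,-1, 0, 0, 0, 0,-1, 1, 0, 0, 0;
      0, 0, 0, 0, 1,-1, 0, 0, 0, 0,-1, 0, 0, 0;
      0, 0, 0, 0, 0, 0,-1, 0, 0, 0, 0, 0, 0, 0;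
      0, 0, 0, 0, 0, 0, 1,-1, 0, 0, 0, 0, 0, 0;
      0, 0, 0, 0, 0, 0, 0, 1,-1, 0, 0, 0, 0, 0;
      0, 0, 0, 0, 0, 0, 0, 0, 1,-1, 0, 0, 0, 0;
      0, 0, 0, 0, 0, 0, 0, 0, 0, 1,-1, 0, 0, 0;
      0, 0, 0, 0, 0, 0, 0, 0, 0, 0, 1,-1, 0, 0;
      0, 0, 0, 0, 0, 0, 0, 0, 0, 0, 0, 0, -(n:ℤ), (n:ℤ);
      0, 0, 0, 0, 0, 0, 0, 0, 0, 0, 0, 0, (n:ℤ)+1, -((n:ℤ)+1)]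

/-- The upper-left 12×12 submatrix of `Sₙ` (independent of `n`): the Seifert
matrix of the torus knot `T(3,7)`. -/
def Mmat : Matrix (Fin 12) (Fin 12) ℤ :=
  (Smat 0).submatrix (Fin.castLE (by omega)) (Fin.castLE (by omega))

/-- `Sₙ` as a complex matrix. -/
def SmatC (n : ℕ) : Matrix (Fin 14) (Fin 14) ℂ := (Smat n).map fun a => (a : ℂ)

/-- `M` as a complex matrix. -/
def MmatC : Matrix (Fin 12) (Fin 12) ℂ := Mmat.map fun a => (a : ℂ)

/-- The Alexander polynomial `Δ_{K₀}` evaluated at `x`. -/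
noncomputable def P0 (x : ℂ) : ℂ :=
  x ^ 12 - x ^ 10 + x ^ 6 - x ^ 4 + 1 - x⁻¹ ^ 4 + x⁻¹ ^ 6 - x⁻¹ ^ 10 + x⁻¹ ^ 12

/-- The Alexander polynomial `Δ_{K₁}` evaluated at `x`. -/
noncomputable def P1 (x : ℂ) : ℂ :=
  2 * x ^ 12 - 3 * x ^ 10 + x ^ 8 + 2 * x ^ 6 - 3 * x ^ 4 + x ^ 2 + 1
    + x⁻¹ ^ 2 - 3 * x⁻¹ ^ 4 + 2 * x⁻¹ ^ 6 + x⁻¹ ^ 8 - 3 * x⁻¹ ^ 10 + 2 * x⁻¹ ^ 12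

/-- The permutation `0 → 6 → 1 → 7 → 2 → ⋯ → 5 → 11 → 0` of the indices, which fixes `12` and `13`;
its square is the cyclic shift `a_i → a_{i+1}`, `b_i → b_{i+1}`. -/
def interleave : Equiv.Perm (Fin 14) where
  toFun := ![6, 7, 8, 9, 10, 11, 1, 2, 3, 4, 5, 0, 12, 13]
  invFun := ![11, 6, 7, 8, 9, 10, 0, 1, 2, 3, 4, 5, 12, 13]
  left_inv := by decide
  right_inv := by decide

/-- The reordering of the rows: the ten rows that are solved, then the remaining four. -/
def rowEquiv : Fin 10 ⊕ Fin 4 ≃ Fin 14 where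
  toFun := Sum.elim ![0, 6, 1, 7, 2, 8, 3, 9, 4, 10] ![5, 11, 12, 13]
  invFun := ![.inl 0, .inl 2, .inl 4, .inl 6, .inl 8, .inr 0, .inl 1, .inl 3, .inl 5, .inl 7,
    .inl 9, .inr 1, .inr 2, .inr 3]
  left_inv := by decide
  right_inv := by decide

/-- The reordering of the columns: the ten unknowns `a₁, b₁, …, a₅, b₅` that are solved for, then
the free unknowns `a₀, b₀, v₁₂, v₁₃`. -/
def colOrder : Fin 10 ⊕ Fin 4 → Fin 14 :=
  Sum.elim ![1, 7, 2, 8, 3, 9, 4, 10, 5, 11] ![0, 6, 12, 13]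

/-- Coefficients of the solved unknowns in the solved rows. -/
def blockL (z : ℂ) : Matrix (Fin 10) (Fin 10) ℂ :=
  !![-1, 0, 0, 0, 0, 0, 0, 0, 0, 0;
    1, -1, 0, 0, 0, 0, 0, 0, 0, 0;
    -z + 1, z, -1, 0, 0, 0, 0, 0, 0, 0;
    -1, -z + 1, 1, -1, 0, 0, 0, 0, 0, 0;
    z, -z, -z + 1, z, -1, 0, 0, 0, 0, 0;
    0, z, -1, -z + 1, 1, -1, 0, 0, 0, 0;
    0, 0, z, -z, -z + 1, z, -1, 0, 0, 0;
    0, 0, 0, z, -1, -z + 1, 1, -1, 0, 0;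
    0, 0, 0, 0, z, -z, -z + 1, z, -1, 0;
    0, 0, 0, 0, 0, z, -1, -z + 1, 1, -1]

/-- Coefficients of the free unknowns in the solved rows. -/
def blockK (z : ℂ) : Matrix (Fin 10) (Fin 4) ℂ :=
  !![-z + 1, z, 0, -z;
    -1, -z + 1, 0, 0;
    z, -z, 0, 0;
    0, z, 0, 0;
    0, 0, 0, 0;
    0, 0, 0, 0;
    0, 0, 0, 0;
    0, 0, 0, 0;
    0, 0, 0, 0;
    0, 0, 0, 0]

/-- Coefficients of the solved unknowns in the remaining rows. -/
def blockC (z : ℂ) : Matrix (Fin 4) (Fin 10) ℂ :=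
  !![0, 0, 0, 0, 0, 0, z, -z, -z + 1, 0;
    0, 0, 0, 0, 0, 0, 0, z, 0, -z + 1;
    0, 0, 0, 0, 0, 0, 0, 0, 0, 0;
    0, 0, 0, 0, 0, 0, 0, 0, 0, 0]

/-- Coefficients of the free unknowns in the remaining rows. -/
def blockD (n z : ℂ) : Matrix (Fin 4) (Fin 4) ℂ :=
  !![0, 0, 0, 0;
    0, 0, 0, 0;
    0, 0, -(n * z) + n, n * z - (n + 1);
    1, 0, (n + 1) * z - n, -((n + 1) * z) + (n + 1)]

/-- The solved unknowns in terms of the free ones. -/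
def solX (z : ℂ) : Matrix (Fin 10) (Fin 4) ℂ :=
  !![-z + 1, z, 0, -z;
    -z, 1, 0, -z;
    -z + 1, -z ^ 2 + z, 0, -z;
    z ^ 2 - z, -z ^ 2 + 1, 0, z ^ 2 - z;
    z ^ 3 - z + 1, -z ^ 2 + z, 0, z ^ 3 - z;
    z ^ 2 - z, z ^ 3 - z ^ 2 + 1, 0, z ^ 2 - z;
    -z ^ 4 + z ^ 3 - z + 1, z ^ 4 - z ^ 2 + z, 0, -z ^ 4 + z ^ 3 - z;
    -z ^ 4 + z ^ 2 - z, z ^ 3 - z ^ 2 + 1, 0, -z ^ 4 + z ^ 2 - z;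
    -z ^ 4 + z ^ 3 - z + 1, -z ^ 5 + z ^ 4 - z ^ 2 + z, 0, -z ^ 4 + z ^ 3 - z;
    z ^ 5 - z ^ 4 + z ^ 2 - z, -z ^ 5 + z ^ 3 - z ^ 2 + 1, 0, z ^ 5 - z ^ 4 + z ^ 2 - z]

/-- The Schur complement of `blockL`, written out. -/
def schurT (n z : ℂ) : Matrix (Fin 4) (Fin 4) ℂ :=
  !![z ^ 5 - z ^ 4 + z ^ 2 - z + 1, z ^ 6 - z ^ 5 + z ^ 3 - z ^ 2, 0, z ^ 5 - z ^ 4 + z ^ 2 - z;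
    -z ^ 6 + z ^ 5 - z ^ 4 + z ^ 2 - z, z ^ 6 - z ^ 5 + z ^ 3 - z ^ 2 + 1, 0, -z ^ 6 + z ^ 5 - z ^ 4 + z ^ 2 - z;
    0, 0, -(n * z) + n, n * z - (n + 1);
    1, 0, (n + 1) * z - n, -((n + 1) * z) + (n + 1)]

set_option maxHeartbeats 4000000 in
lemma submatrix_eq_fromBlocks (n : ℕ) (z : ℂ) :
    (z • SmatC n - (SmatC n)ᵀ).submatrix rowEquiv colOrder =
      fromBlocks (blockL z) (blockK z) (blockC z) (blockD n z) := by
  ext i j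
  rcases i with i | i <;> rcases j with j | j <;> fin_cases i <;> fin_cases j <;>
    simp [SmatC, Smat, rowEquiv, colOrder, blockL, blockK, blockC, blockD] <;> ring

lemma det_submatrix_order (A : Matrix (Fin 14) (Fin 14) ℂ) :
    (A.submatrix rowEquiv colOrder).det = A.det := by
  have h : A.submatrix rowEquiv colOrder =
      (A.submatrix id (interleave * interleave)).submatrix rowEquiv rowEquiv := by
    have hc : ∀ j, colOrder j = (interleave * interleave) (rowEquiv j) := by decide
    ext i j
    simp [hc]
  rw [h, det_submatrix_equiv_self, det_permute']
  rcases Int.units_eq_one_or (Equiv.Perm.sign interleave) with hs | hs <;> simp [hs]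

lemma det_blockL (z : ℂ) : (blockL z).det = 1 := by
  rw [det_of_isLowerTriangular]
  · simp [blockL, Fin.prod_univ_succ]
  · intro i j hij
    replace hij : i < j := hij
    fin_cases i <;> fin_cases j <;> first | rfl | exact absurd hij (by decide)

set_option maxHeartbeats 4000000 in
lemma blockL_mul_solX_add (z : ℂ) : blockL z * solX z + blockK z = 0 := by
  ext i j
  fin_cases i <;> fin_cases j <;>
    simp [blockL, blockK, solX] <;> ring

lemma blockC_mul_solX_add (n z : ℂ) : blockC z * solX z + blockD n z = schurT n z := by
  ext i j
  fin_cases i <;> fin_cases j <;>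
    simp [blockC, blockD, solX, schurT] <;> ring

/-- The determinant equals that of the Schur complement: multiplying on the right by the
unipotent matrix with off-diagonal block `solX` clears the block `blockK`. -/
lemma det_eq_det_schurT (n : ℕ) (z : ℂ) :
    (z • SmatC n - (SmatC n)ᵀ).det = (schurT n z).det := by
  have h : fromBlocks (blockL z) (blockK z) (blockC z) (blockD n z) * fromBlocks 1 (solX z) 0 1 =
      fromBlocks (blockL z) 0 (blockC z) (schurT n z) := by
    rw [fromBlocks_multiply]
    simp [blockL_mul_solX_add, blockC_mul_solX_add]
  have hd := congrArg det h
  rw [det_mul, det_fromBlocks_zero₂₁, det_fromBlocks_zero₁₂, det_blockL, det_one, det_one,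
    one_mul, mul_one, one_mul, ← submatrix_eq_fromBlocks, det_submatrix_order] at hd
  exact hd

lemma det_schurT (n z : ℂ) :
    (schurT n z).det =
      (1 - n) * (z ^ 13 - z ^ 12 + z ^ 10 - z ^ 9 + z ^ 7 - z ^ 5 + z ^ 4 - z ^ 2 + z) +
      n * (2 * z ^ 13 - 3 * z ^ 12 + z ^ 11 + 2 * z ^ 10 - 3 * z ^ 9 + z ^ 8 + z ^ 7 + z ^ 6
        - 3 * z ^ 5 + 2 * z ^ 4 + z ^ 3 - 3 * z ^ 2 + 2 * z) := by
  simp [schurT, det_succ_row_zero, Fin.sum_univ_succ, Fin.succAbove]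
  ring

/-- The skein-relation consequence `Δ_{Kₙ} = (1-n) Δ_{K₀} + n Δ_{K₁}`. -/
theorem stmt8 (n : ℕ) (x : ℂ) (hx : x ≠ 0) :
    (x • SmatC n - x⁻¹ • (SmatC n)ᵀ).det =
      (1 - (n : ℂ)) * P0 x + (n : ℂ) * P1 x := by
  have hA : x • SmatC n - x⁻¹ • (SmatC n)ᵀ = x⁻¹ • (x ^ 2 • SmatC n - (SmatC n)ᵀ) := by
    rw [smul_sub, smul_smul]
    congr 2
    field_simp
  rw [hA, det_smul, det_eq_det_schurT, det_schurT, Fintype.card_fin, P0, P1]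
  field_simp
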